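/- arXiv:1705.08316 — 2 statements merged into one kernel-verified Lean document; each statement's English description precedes it below -/
import Mathlib

section
/- Let G be a connected simple graph on n ≥ 2 vertices. Then cfc(G) = n − 1 if and only if G is the star K_{1,n−1}. -/
open SimpleGraph

/-- An edge-coloring `c` makes `G` conflict-free connected: every pair of distinct
vertices is joined by a path on which some color appears on exactly one edge. -/
def IsCFCColoring {V : Type*} (G : SimpleGraph V) (c : Sym2 V → ℕ) : Prop :=
  ∀ u v : V, u ≠ v → ∃ p : G.Path u v, ∃ e ∈ (p.1).edges,
    ∀ e' ∈ (p.1).edges, c e' = c e → e' = e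

/-- The conflict-free connection number of `G`: the least `k` such that some
edge-coloring of `G` with colors from `{0, …, k-1}` makes `G` conflict-free connected. -/
noncomputable def cfcNum {V : Type*} (G : SimpleGraph V) : ℕ :=
  sInf {k | ∃ c : Sym2 V → ℕ, (∀ e ∈ G.edgeSet, c e < k) ∧ IsCFCColoring G c}

/-! A conflict-free coloring of a tree separates any two edges sharing a vertex, because paths in
a tree are unique; hence a star needs one color per edge. Conversely, giving distinct colors to the
edges of a spanning tree `T` uses `n - 1` colors, and two edges of `T` may be given the same color
unless they form a path of length two whose ends are non-adjacent in `G`. A tree in which no two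
edges are disjoint is a star, and if `T` is a star but `G` is not, then some edge of `G` joins two
leaves of `T` and closes up a triangle with two edges of `T`; either way one color is saved. -/

section Walk

variable {V : Type*} {G : SimpleGraph V} {u v : V}

lemma exists_edges_eq_pair_of_length_le_two (p : G.Walk u v) (huv : u ≠ v) (hadj : ¬ G.Adj u v)
    (hp : p.length ≤ 2) : ∃ m, p.edges = [s(u, m), s(m, v)] := by
  match p with
  | .nil => exact absurd rfl huv
  | .cons huv' .nil => exact absurd huv' hadj
  | .cons (v := m) _ (.cons _ .nil) => exact ⟨m, rfl⟩
  | .cons _ (.cons _ (.cons _ _)) => simp only [Walk.length_cons] at hp; omega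

lemma exists_edges_eq_pair_of_edges_subset_pair {p : G.Walk u v} (hp : p.IsTrail) (huv : u ≠ v)
    (hadj : ¬ G.Adj u v) {e f : Sym2 V} (hef : p.edges ⊆ [e, f]) :
    ∃ m, p.edges = [s(u, m), s(m, v)] :=
  exists_edges_eq_pair_of_length_le_two p huv hadj <|
    p.length_edges ▸ (List.subperm_of_subset hp.edges_nodup hef).length_le

/-- A walk is conflict-free for an edge-coloring if some color occurs on exactly one of its
edges. Walks rather than paths are allowed, so that the notion does not carry an `IsPath` proof. -/
def IsConflictFree (c : Sym2 V → ℕ) (p : G.Walk u v) : Prop :=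
  ∃ e ∈ p.edges, ∀ e' ∈ p.edges, c e' = c e → e' = e

lemma isConflictFree_of_injOn {c : Sym2 V → ℕ} (hc : Set.InjOn c G.edgeSet) (huv : u ≠ v)
    (p : G.Walk u v) : IsConflictFree c p := by
  obtain ⟨e, he⟩ : ∃ e, e ∈ p.edges :=
    List.exists_mem_of_ne_nil _ fun h => huv (Walk.edges_eq_nil.mp h).eq
  exact ⟨e, he, fun e' he' =>
    hc (p.edges_subset_edgeSet he') (p.edges_subset_edgeSet he)⟩

lemma isConflictFree_mapLe_iff {H : SimpleGraph V} (hGH : G ≤ H) {c : Sym2 V → ℕ}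
    {p : G.Walk u v} : IsConflictFree c (p.mapLe hGH) ↔ IsConflictFree c p := by
  simp only [IsConflictFree, Walk.edges_mapLe_eq_edges]

lemma isConflictFree_toWalk (c : Sym2 V → ℕ) (huv : G.Adj u v) :
    IsConflictFree c huv.toWalk :=
  ⟨s(u, v), by simp, by simp⟩

end Walk

section Mergeable

variable {V : Type*} {G : SimpleGraph V} {e f : Sym2 V}

/-- Two edges are mergeable in `G` if they are disjoint or form two sides of a triangle whose third
side is an edge of `G`. Such edges of a spanning tree may share a color in a coloring that is
otherwise injective on the tree. Taking `u = v` in the definition excludes `e = f`. -/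
def IsMergeable (G : SimpleGraph V) (e f : Sym2 V) : Prop :=
  ∀ ⦃u m v : V⦄, e = s(u, m) → f = s(m, v) → G.Adj u v

lemma IsMergeable.symm (h : IsMergeable G e f) : IsMergeable G f e :=
  fun _ _ _ hf he => (h (he.trans Sym2.eq_swap) (hf.trans Sym2.eq_swap)).symm

lemma IsMergeable.ne (h : IsMergeable G e f) : e ≠ f := by
  rintro rfl
  induction e with | _ u m
  exact (h rfl Sym2.eq_swap).ne rfl

lemma isMergeable_of_disjoint (h : ∀ x ∈ e, x ∉ f) : IsMergeable G e f := by
  rintro u m v rfl rfl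
  exact absurd (Sym2.mem_mk_left m v) (h m (Sym2.mem_mk_right u m))

lemma isMergeable_of_adj {u v : V} (m : V) (huv : G.Adj u v) :
    IsMergeable G s(u, m) s(m, v) := by
  intro u' m' v' hu hv
  have := huv.ne
  grind [Sym2.eq_iff]

/-- If the two edges `e ≠ f` were the only edges of a trail, they would be consecutive, and
`IsMergeable` would make the endpoints adjacent; so some third edge has a color of its own. -/
lemma isConflictFree_of_injOn_sdiff_singleton {T : SimpleGraph V} {c : Sym2 V → ℕ}
    (hc : Set.InjOn c (T.edgeSet \ {f})) (he : e ∈ T.edgeSet) (hcef : c f = c e)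
    (hmerge : IsMergeable G e f) {u v : V} {p : T.Walk u v} (hp : p.IsTrail) (huv : u ≠ v)
    (hTadj : ¬ T.Adj u v) (hGadj : ¬ G.Adj u v) : IsConflictFree c p := by
  obtain ⟨x, hxp, hxe, hxf⟩ : ∃ x ∈ p.edges, x ≠ e ∧ x ≠ f := by
    by_contra! hcover
    have hsub : p.edges ⊆ [e, f] := fun x hx => by
      simpa using or_iff_not_imp_left.mpr (hcover x hx)
    obtain ⟨m, hm⟩ := exists_edges_eq_pair_of_edges_subset_pair hp huv hTadj hsub
    have hne : s(u, m) ≠ s(m, v) := by simpa [hm] using hp.edges_nodup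
    simp only [hm, List.cons_subset, List.mem_cons, List.not_mem_nil, or_false] at hsub
    obtain ⟨hue | huf, hve | hvf, -⟩ := hsub
    · exact hne (hue.trans hve.symm)
    · exact hGadj (hmerge hue.symm hvf.symm)
    · exact hGadj (hmerge.symm huf.symm hve.symm)
    · exact hne (huf.trans hvf.symm)
  have hxT : x ∈ T.edgeSet := p.edges_subset_edgeSet hxp
  refine ⟨x, hxp, fun y hyp hcyx => ?_⟩
  have hyf : y ≠ f := by
    rintro rfl
    exact hxe (hc ⟨hxT, hxf⟩ ⟨he, hmerge.ne⟩ (hcyx.symm.trans hcef))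
  exact hc ⟨p.edges_subset_edgeSet hyp, hyf⟩ ⟨hxT, hxf⟩ hcyx

end Mergeable

section Coloring

variable {V : Type*} {G : SimpleGraph V}

lemma isCFCColoring_of_injOn (hG : G.Connected) {c : Sym2 V → ℕ}
    (hc : Set.InjOn c G.edgeSet) : IsCFCColoring G c := by
  intro u v huv
  obtain ⟨p, hp⟩ := hG.exists_isPath u v
  exact ⟨⟨p, hp⟩, isConflictFree_of_injOn hc huv p⟩

lemma isCFCColoring_of_injOn_sdiff_singleton {T : SimpleGraph V} (hT : T.Connected)
    (hTG : T ≤ G) {c : Sym2 V → ℕ} {e f : Sym2 V} (hc : Set.InjOn c (T.edgeSet \ {f}))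
    (he : e ∈ T.edgeSet) (hcef : c f = c e) (hmerge : IsMergeable G e f) :
    IsCFCColoring G c := by
  intro u v huv
  by_cases hadj : G.Adj u v
  · exact ⟨Path.singleton hadj, isConflictFree_toWalk c hadj⟩
  obtain ⟨p, hp⟩ := hT.exists_isPath u v
  exact ⟨⟨p.mapLe hTG, hp.mapLe hTG⟩, (isConflictFree_mapLe_iff hTG).mpr <|
    isConflictFree_of_injOn_sdiff_singleton hc he hcef hmerge hp.isTrail huv
      (fun h => hadj (hTG h)) hadj⟩

lemma IsCFCColoring.ne_of_isAcyclic {c : Sym2 V → ℕ} (hc : IsCFCColoring G c)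
    (hG : G.IsAcyclic) {u m v : V} (hum : G.Adj u m) (hmv : G.Adj m v) (huv : u ≠ v) :
    c s(u, m) ≠ c s(m, v) := by
  intro heq
  obtain ⟨p, hp⟩ := hc u v huv
  have hpath : (Walk.cons hum (.cons hmv .nil)).IsPath := by
    simp [hum.ne, hmv.ne, huv]
  obtain rfl : p = ⟨_, hpath⟩ := (hG.subsingleton_path u v).elim _ _
  have hne : s(u, m) ≠ s(m, v) := by simpa using hpath.isTrail.edges_nodup
  simp only [Walk.edges_cons, Walk.edges_nil, List.mem_cons, List.not_mem_nil, or_false,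
    forall_eq_or_imp, forall_eq, exists_eq_or_imp, exists_eq_left] at hp
  obtain ⟨-, h⟩ | ⟨h, -⟩ := hp
  · exact hne (h heq.symm).symm
  · exact hne (h heq)

lemma IsCFCColoring.degree_le_of_isAcyclic {c : Sym2 V → ℕ} (hc : IsCFCColoring G c)
    (hG : G.IsAcyclic) {k : ℕ} (hk : ∀ e ∈ G.edgeSet, c e < k) (v : V)
    [Fintype (G.neighborSet v)] : G.degree v ≤ k := by
  rw [← G.card_neighborFinset_eq_degree, ← Finset.card_range k]
  refine Finset.card_le_card_of_injOn (fun w => c s(v, w)) (fun w hw => ?_) ?_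
  · simpa using hk s(v, w) (by simpa using hw)
  · intro a ha b hb hab
    have ha : G.Adj v a := by simpa using ha
    have hb : G.Adj v b := by simpa using hb
    by_contra hne
    exact hc.ne_of_isAcyclic hG ha.symm hb hne (by rwa [Sym2.eq_swap])

end Coloring

section CFCNum

variable {V : Type*} {G : SimpleGraph V}

lemma exists_injOn_lt_ncard {α : Type*} {s : Set α} (hs : s.Finite) :
    ∃ g : α → ℕ, Set.InjOn g s ∧ ∀ x ∈ s, g x < s.ncard := by
  obtain ⟨g, hg, hinj⟩ := hs.exists_injOn_of_encard_le (t := Set.Iio s.ncard) <| by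
    rw [← hs.cast_ncard_eq, ← (Set.finite_Iio _).cast_ncard_eq]
    simp
  exact ⟨g, hinj, hg⟩

lemma cfcNum_le {c : Sym2 V → ℕ} (hc : IsCFCColoring G c) {k : ℕ}
    (hk : ∀ e ∈ G.edgeSet, c e < k) : cfcNum G ≤ k :=
  Nat.sInf_le ⟨c, hk, hc⟩

lemma exists_isCFCColoring_lt_ncard_edgeSet [Finite G.edgeSet] (hG : G.Connected) :
    ∃ c : Sym2 V → ℕ, (∀ e ∈ G.edgeSet, c e < G.edgeSet.ncard) ∧ IsCFCColoring G c := by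
  obtain ⟨c, hinj, hlt⟩ := exists_injOn_lt_ncard G.edgeSet.toFinite
  exact ⟨c, hlt, isCFCColoring_of_injOn hG hinj⟩

lemma cfcNum_le_ncard_edgeSet [Finite G.edgeSet] (hG : G.Connected) :
    cfcNum G ≤ G.edgeSet.ncard :=
  Nat.sInf_le (exists_isCFCColoring_lt_ncard_edgeSet hG)

lemma exists_isCFCColoring_lt_cfcNum [Finite G.edgeSet] (hG : G.Connected) :
    ∃ c : Sym2 V → ℕ, (∀ e ∈ G.edgeSet, c e < cfcNum G) ∧ IsCFCColoring G c :=
  Nat.sInf_mem (s := {k | ∃ c : Sym2 V → ℕ, (∀ e ∈ G.edgeSet, c e < k) ∧ IsCFCColoring G c})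
    ⟨_, exists_isCFCColoring_lt_ncard_edgeSet hG⟩

lemma degree_le_cfcNum [Finite G.edgeSet] (hG : G.IsTree) (v : V)
    [Fintype (G.neighborSet v)] : G.degree v ≤ cfcNum G := by
  obtain ⟨c, hlt, hc⟩ := exists_isCFCColoring_lt_cfcNum hG.connected
  exact hc.degree_le_of_isAcyclic hG.isAcyclic hlt v

lemma cfcNum_starGraph [Fintype V] (v : V) : cfcNum (starGraph v) = Fintype.card V - 1 := by
  classical
  have hcard := (isTree_starGraph v).card_edgeFinset
  apply le_antisymm
  · have := cfcNum_le_ncard_edgeSet (connected_starGraph v)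
    rw [← coe_edgeFinset, Set.ncard_coe_finset] at this
    omega
  · rw [← degree_starGraph_center (r := v)]
    exact degree_le_cfcNum (isTree_starGraph v) v

lemma cfcNum_le_ncard_edgeSet_sub_one {T : SimpleGraph V} [Finite T.edgeSet]
    (hT : T.Connected) (hTG : T ≤ G) {e f : Sym2 V} (he : e ∈ T.edgeSet) (hf : f ∈ T.edgeSet)
    (hmerge : IsMergeable G e f) : cfcNum G ≤ T.edgeSet.ncard - 1 := by
  classical
  obtain ⟨g, hinj, hlt⟩ := exists_injOn_lt_ncard (T.edgeSet.toFinite.sdiff (t := {f}))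
  rw [Set.ncard_sdiff_singleton_of_mem hf] at hlt
  have he' : e ∈ T.edgeSet \ {f} := ⟨he, hmerge.ne⟩
  let c : Sym2 V → ℕ := fun x => if x ∈ T.edgeSet \ {f} then g x else g e
  have hcg : Set.EqOn c g (T.edgeSet \ {f}) := fun x hx => if_pos hx
  have hcef : c f = c e := (if_neg (by simp)).trans (hcg he').symm
  refine cfcNum_le (isCFCColoring_of_injOn_sdiff_singleton hT hTG (hinj.congr hcg.symm) he hcef
    hmerge) fun x _ => ?_
  by_cases hx : x ∈ T.edgeSet \ {f}
  · exact (hcg hx).trans_lt (hlt x hx)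
  · exact (if_neg hx).trans_lt (hlt e he')

end CFCNum

section Star

variable {V : Type*} {G : SimpleGraph V}

lemma eq_starGraph_of_le (hG : G.Connected) {v : V} (h : G ≤ starGraph v) : G = starGraph v :=
  (isTree_iff_minimal_connected.mp (isTree_starGraph v)).eq_of_le hG h

lemma le_starGraph_of_forall_mem_edgeSet {v : V} (h : ∀ e ∈ G.edgeSet, v ∈ e) :
    G ≤ starGraph v := by
  intro a b hab
  have hv := Sym2.mem_iff.mp (h s(a, b) hab)
  exact starGraph_adj.mpr ⟨hab.ne, hv.imp Eq.symm Eq.symm⟩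

lemma exists_forall_mem_edgeSet_of_cliqueFree_three [Nonempty V] (hG : G.CliqueFree 3)
    (h : ∀ e ∈ G.edgeSet, ∀ f ∈ G.edgeSet, ∃ x ∈ e, x ∈ f) :
    ∃ v, ∀ e ∈ G.edgeSet, v ∈ e := by
  classical
  by_contra! hmiss
  obtain ⟨e, he, -⟩ := hmiss (Classical.arbitrary V)
  induction e with | _ a b
  obtain ⟨f, hf, haf⟩ := hmiss a
  obtain ⟨g, hg, hbg⟩ := hmiss b
  have hbf : b ∈ f := by grind [h s(a, b) he f hf]
  have hag : a ∈ g := by grind [h s(a, b) he g hg]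
  obtain ⟨c, hcf, hcg⟩ := h f hf g hg
  have hac : a ≠ c := fun h => haf (h ▸ hcf)
  have hbc : b ≠ c := fun h => hbg (h ▸ hcg)
  obtain rfl : f = s(b, c) := (Sym2.mem_and_mem_iff hbc).mp ⟨hbf, hcf⟩
  obtain rfl : g = s(a, c) := (Sym2.mem_and_mem_iff hac).mp ⟨hag, hcg⟩
  exact hG {a, b, c} (is3Clique_triple_iff.mpr ⟨he, hg, hf⟩)

lemma exists_isMergeable_of_starGraph_lt {v : V} (h : starGraph v < G) :
    ∃ e ∈ (starGraph v).edgeSet, ∃ f ∈ (starGraph v).edgeSet, IsMergeable G e f := by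
  obtain ⟨a, b, hab, hnot⟩ : ∃ a b, G.Adj a b ∧ ¬ (starGraph v).Adj a b := by
    simpa [SimpleGraph.le_iff_adj] using h.not_ge
  obtain ⟨hav, hbv⟩ : a ≠ v ∧ b ≠ v := by simpa [hab.ne] using hnot
  exact ⟨s(a, v), starGraph_center_adj' hav.symm, s(v, b), starGraph_center_adj hbv.symm,
    isMergeable_of_adj v hab⟩

lemma exists_isMergeable_of_forall_ne_starGraph {T : SimpleGraph V} (hT : T.IsTree)
    (hTG : T ≤ G) (hG : ∀ v, G ≠ starGraph v) :
    ∃ e ∈ T.edgeSet, ∃ f ∈ T.edgeSet, IsMergeable G e f := by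
  by_cases h : ∀ e ∈ T.edgeSet, ∀ f ∈ T.edgeSet, ∃ x ∈ e, x ∈ f
  · have := hT.connected.nonempty
    obtain ⟨v, hv⟩ :=
      exists_forall_mem_edgeSet_of_cliqueFree_three (hT.isAcyclic.cliqueFree le_rfl) h
    obtain rfl := eq_starGraph_of_le hT.connected (le_starGraph_of_forall_mem_edgeSet hv)
    exact exists_isMergeable_of_starGraph_lt (hTG.lt_of_ne (hG v).symm)
  · push Not at h
    obtain ⟨e, he, f, hf, hdisj⟩ := h
    exact ⟨e, he, f, hf, isMergeable_of_disjoint hdisj⟩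

lemma eq_starGraph_iff {v : V} :
    G = starGraph v ↔ ∀ a b : V, G.Adj a b ↔ ((a = v ∨ b = v) ∧ a ≠ b) := by
  simp only [SimpleGraph.ext_iff, funext_iff, starGraph_adj, eq_iff_iff, and_comm]

end Star

/-- cfc(G) = n − 1 if and only if G is the star K_{1,n−1}, i.e. some vertex v is
adjacent to exactly the other n − 1 vertices and there are no other edges. -/
theorem cfcNum_eq_card_sub_one_iff_star {V : Type*} [Fintype V] (G : SimpleGraph V)
    (hG : G.Connected) (n : ℕ) (hn : Fintype.card V = n) (h2 : 2 ≤ n) :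
    cfcNum G = n - 1 ↔ ∃ v : V, ∀ a b : V, G.Adj a b ↔ ((a = v ∨ b = v) ∧ a ≠ b) := by
  classical
  subst hn
  simp only [← eq_starGraph_iff]
  constructor
  · intro hcfc
    by_contra! hstar
    obtain ⟨T, hTG, hT⟩ := hG.exists_isTree_le
    obtain ⟨e, he, f, hf, hmerge⟩ := exists_isMergeable_of_forall_ne_starGraph hT hTG hstar
    have hle := cfcNum_le_ncard_edgeSet_sub_one hT.connected hTG he hf hmerge
    rw [← coe_edgeFinset, Set.ncard_coe_finset] at hle
    have hcard := hT.card_edgeFinset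
    omega
  · rintro ⟨v, rfl⟩
    exact cfcNum_starGraph v
end

section
/- Let n ≥ 5. If G is isomorphic to K_{1,n−1}+e or to U_n, then cfc(G) = n − 3. -/
open SimpleGraph

/-- G is (a copy of) K_{1,n−1}+e : a star whose center v is adjacent to all other
vertices, together with one extra edge joining two leaves x and y. -/
def IsStarPlusEdge {V : Type*} (G : SimpleGraph V) : Prop :=
  ∃ v x y : V, v ≠ x ∧ v ≠ y ∧ x ≠ y ∧
    ∀ a b : V, G.Adj a b ↔ (((a = v ∨ b = v) ∧ a ≠ b) ∨ s(a, b) = s(x, y))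

/-- G is (a copy of) U_n : obtained from the double star S_{3,n−3} — with adjacent
centers u (degree 3, with leaf neighbors x, y) and w (adjacent to u and to all the
remaining vertices) — by adding the edge xy. -/
def IsUnGraph {V : Type*} (G : SimpleGraph V) : Prop :=
  ∃ u w x y : V, u ≠ w ∧ u ≠ x ∧ u ≠ y ∧ w ≠ x ∧ w ≠ y ∧ x ≠ y ∧
    ∀ a b : V, G.Adj a b ↔
      (s(a, b) = s(u, w) ∨ s(a, b) = s(u, x) ∨ s(a, b) = s(u, y) ∨ s(a, b) = s(x, y) ∨
        ∃ z : V, z ≠ u ∧ z ≠ w ∧ z ≠ x ∧ z ≠ y ∧ s(a, b) = s(w, z))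

/-!
If two edges `va` and `vb` are bridges, then `a, v, b` is the only path from `a` to `b`, so the two
edges need different colors: every family of bridges at a common vertex forces as many colors.

Both `K_{1,n-1}+e` and `U_n` consist of a star `K_{1,n-3}` and a triangle `t x y` glued to it at a
vertex `t` of the star, so the `n - 3` star edges are such a family. Conversely, give these edges
`n - 3 ≥ 2` different colors and reuse the same colors elsewhere, in any way that makes `xt` and
`yt` differ. A path from `x` or `y` into the star can leave the triangle directly or by the detour
through the third vertex, and one of the two is conflict-free.
-/

section ConflictFreeConnection

variable {V : Type*} {G : SimpleGraph V} {c : Sym2 V → ℕ} {a b v w : V}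

/-- The vertices `u` and `v` are conflict-free joined: `IsCFCColoring G c` is this relation
between all pairs of distinct vertices. -/
def ConflictFreeJoined (G : SimpleGraph V) (c : Sym2 V → ℕ) (u v : V) : Prop :=
  ∃ p : G.Path u v, ∃ e ∈ (p.1).edges, ∀ e' ∈ (p.1).edges, c e' = c e → e' = e

namespace ConflictFreeJoined

theorem symm (h : ConflictFreeJoined G c a b) : ConflictFreeJoined G c b a := by
  obtain ⟨p, e, he, huniq⟩ := h
  exact ⟨p.reverse, e, by simpa using he, by simpa using huniq⟩

theorem of_adj (h : G.Adj a b) : ConflictFreeJoined G c a b :=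
  ⟨Path.singleton h, s(a, b), by simp [Path.singleton], by simp [Path.singleton]⟩

theorem of_adj_adj (h₁ : G.Adj a v) (h₂ : G.Adj v b) (hab : a ≠ b)
    (hc : c s(a, v) ≠ c s(v, b)) : ConflictFreeJoined G c a b :=
  ⟨⟨.cons h₁ (.cons h₂ .nil), by simp [Walk.cons_isPath_iff, h₁.ne, h₂.ne, hab]⟩,
    s(a, v), by simp, by simp [hc.symm]⟩

-- Three colors that are not all equal always include one that occurs exactly once.
theorem of_adj_adj_adj (h₁ : G.Adj a v) (h₂ : G.Adj v w) (h₃ : G.Adj w b) (haw : a ≠ w)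
    (hab : a ≠ b) (hvb : v ≠ b) (hc : c s(v, w) ≠ c s(w, b)) : ConflictFreeJoined G c a b := by
  let p : G.Path a b := ⟨.cons h₁ (.cons h₂ (.cons h₃ .nil)), by
    simp [Walk.cons_isPath_iff, h₁.ne, h₂.ne, h₃.ne, haw, hab, hvb]⟩
  by_cases h : c s(a, v) = c s(v, w)
  · exact ⟨p, s(w, b), by simp [p], by simp [p, h, hc]⟩
  by_cases h' : c s(a, v) = c s(w, b)
  · exact ⟨p, s(v, w), by simp [p], by simp [p, h, hc.symm]⟩
  · exact ⟨p, s(a, v), by simp [p], by simp [p, Ne.symm h, Ne.symm h']⟩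

-- If the direct path `a, v, b` is monochromatic, the detour `a, w, v, b` is conflict-free.
theorem of_triangle (hav : G.Adj a v) (hwv : G.Adj w v) (haw : G.Adj a w)
    (hc : c s(a, v) ≠ c s(w, v)) (hvb : G.Adj v b) (hab : a ≠ b) :
    ConflictFreeJoined G c a b := by
  by_cases hwb : w = b
  · exact of_adj (hwb ▸ haw)
  by_cases hmono : c s(a, v) = c s(v, b)
  · exact of_adj_adj_adj haw hwv hvb hav.ne hab hwb (hmono ▸ hc.symm)
  · exact of_adj_adj hav hvb hab hmono

end ConflictFreeJoined

theorem isBridge_of_forall_adj_boundary (A : Set V) (hv : v ∉ A) (ha : a ∈ A)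
    (h : ∀ x ∉ A, ∀ y ∈ A, G.Adj x y → x = v ∧ y = a) : G.IsBridge s(v, a) := by
  refine isBridge_iff_forall_walk_mem_edges.mpr fun p => ?_
  obtain ⟨d, hd, hfst, hsnd⟩ := p.exists_boundary_dart Aᶜ hv (not_not.mpr ha)
  obtain ⟨rfl, rfl⟩ := h d.fst hfst d.snd (not_not.mp hsnd) d.adj
  exact List.mem_map_of_mem hd

theorem edges_eq_singleton_of_isBridge (h : G.IsBridge s(a, b)) {p : G.Walk a b}
    (hp : p.IsPath) : p.edges = [s(a, b)] := by
  have hmem : s(a, b) ∈ p.edges := isBridge_iff_forall_walk_mem_edges.mp h p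
  obtain ⟨e, he⟩ := List.length_eq_one_iff.mp
    (p.length_edges.trans (hp.length_eq_one_of_mem_edges hmem))
  rw [he] at hmem ⊢
  rw [List.mem_singleton.mp hmem]

theorem edges_eq_pair_of_isBridge (ha : G.IsBridge s(v, a)) (hb : G.IsBridge s(v, b))
    (hvb : G.Adj v b) (hab : a ≠ b) {p : G.Walk a b} (hp : p.IsPath) :
    p.edges = [s(v, a), s(v, b)] := by
  classical
  have hv : v ∈ p.support := by
    have hne : s(v, a) ≠ s(v, b) := Sym2.congr_right.not.mpr hab
    have hmem := isBridge_iff_forall_walk_mem_edges.mp ha (Walk.cons hvb p.reverse)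
    rw [Walk.edges_cons, List.mem_cons, or_iff_right hne, Walk.edges_reverse,
      List.mem_reverse] at hmem
    exact p.fst_mem_support_of_mem_edges hmem
  have htake := edges_eq_singleton_of_isBridge (Sym2.eq_swap ▸ ha) (hp.takeUntil hv)
  have hdrop := edges_eq_singleton_of_isBridge hb (hp.dropUntil hv)
  rw [← p.take_spec hv, Walk.edges_append, htake, hdrop, Sym2.eq_swap]
  rfl

namespace IsCFCColoring

theorem preconnected (hc : IsCFCColoring G c) : G.Preconnected := by
  intro a b
  by_cases hab : a = b
  · exact hab ▸ .rfl
  · exact (hc a b hab).choose.1.reachable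

theorem adj_of_isBridge (hc : IsCFCColoring G c) (h : G.IsBridge s(a, b)) : G.Adj a b :=
  h.reachable_iff_adj.mp (hc.preconnected a b)

theorem injOn_isBridge (hc : IsCFCColoring G c) (v : V) :
    Set.InjOn (fun a => c s(v, a)) {a | G.IsBridge s(v, a)} := by
  intro a ha b hb hcol
  by_contra hab
  obtain ⟨p, e, he, huniq⟩ := hc a b hab
  have hp := edges_eq_pair_of_isBridge ha hb (hc.adj_of_isBridge hb) hab p.2
  have hne : s(v, a) ≠ s(v, b) := Sym2.congr_right.not.mpr hab
  simp only [hp, List.mem_cons, List.not_mem_nil, or_false] at he huniq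
  rcases he with rfl | rfl
  · exact hne (huniq _ (.inr rfl) hcol.symm).symm
  · exact hne (huniq _ (.inl rfl) hcol)

theorem card_le_of_isBridge (hc : IsCFCColoring G c) {k : ℕ} (hk : ∀ e ∈ G.edgeSet, c e < k)
    {S : Finset V} (hS : ∀ a ∈ S, G.IsBridge s(v, a)) : S.card ≤ k := by
  have hmaps : Set.MapsTo (fun a => c s(v, a)) S (Finset.range k) := fun a ha =>
    Finset.mem_coe.mpr (Finset.mem_range.mpr (hk _ (hc.adj_of_isBridge (hS a ha))))
  simpa using Finset.card_le_card_of_injOn _ hmaps ((hc.injOn_isBridge v).mono hS)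

end IsCFCColoring

theorem exists_lt_card_injOn_ne {α : Type*} {S : Finset α} (hS : 2 ≤ S.card) {a b : α}
    (ha : a ∉ S) (hb : b ∉ S) (hab : a ≠ b) :
    ∃ f : α → ℕ, (∀ i, f i < S.card) ∧ Set.InjOn f S ∧ f a ≠ f b := by
  classical
  refine ⟨fun i => if h : i ∈ S then S.equivFin ⟨i, h⟩ else if i = a then 1 else 0,
    fun i => ?_, fun i hi j hj hij => ?_, by simp [ha, hb, hab.symm]⟩
  · dsimp only
    split_ifs <;> omega
  · rw [Finset.mem_coe] at hi hj
    simpa [hi, hj, Fin.val_inj] using hij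

theorem cfcNum_eq_card_of_isBridge {S : Finset V} (hS : 2 ≤ S.card)
    (hbridge : ∀ a ∈ S, G.IsBridge s(v, a)) {e₁ e₂ : Sym2 V} (he₁ : ∀ a ∈ S, s(v, a) ≠ e₁)
    (he₂ : ∀ a ∈ S, s(v, a) ≠ e₂) (hne : e₁ ≠ e₂)
    (hcfc : ∀ c : Sym2 V → ℕ, Set.InjOn (fun a => c s(v, a)) S → c e₁ ≠ c e₂ →
      IsCFCColoring G c) : cfcNum G = S.card := by
  let star : Finset (Sym2 V) := S.map (Sym2.mkEmbedding v)
  have hcard : star.card = S.card := S.card_map _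
  obtain ⟨c, hlt, hinj, hc⟩ := exists_lt_card_injOn_ne (S := star) (a := e₁) (b := e₂)
    (hcard ▸ hS) (by simpa [star] using he₁) (by simpa [star] using he₂) hne
  have hstar : Set.InjOn (fun a => c s(v, a)) S := fun a ha b hb hab =>
    (Sym2.mkEmbedding v).injective
      (hinj (Finset.mem_map_of_mem _ ha) (Finset.mem_map_of_mem _ hb) hab)
  have hmem : S.card ∈ {k | ∃ c : Sym2 V → ℕ, (∀ e ∈ G.edgeSet, c e < k) ∧ IsCFCColoring G c} :=
    ⟨c, fun e _ => hcard ▸ hlt e, hcfc c hstar hc⟩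
  exact le_antisymm (Nat.sInf_le hmem)
    (le_csInf ⟨_, hmem⟩ fun k ⟨_, hk, hc⟩ => hc.card_le_of_isBridge hk hbridge)

/-- The vertices other than `x` and `y` span a star with center `w`, and a triangle `t x y` is
glued to this star at its vertex `t`. The graphs `K_{1,n-1}+e` are those with `t = w`, the graphs
`U_n` those where `t` is a leaf of the star. -/
structure IsStarWithTriangle (G : SimpleGraph V) (w t x y : V) : Prop where
  x_ne_center : x ≠ w
  y_ne_center : y ≠ w
  adj_center : ∀ a, a ≠ w → a ≠ x → a ≠ y → G.Adj a w
  adj_xy : G.Adj x y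
  adj_xt : G.Adj x t
  adj_yt : G.Adj y t
  eq_center_of_adj : ∀ a b, G.Adj a b → a ≠ x → a ≠ y → b ≠ x → b ≠ y → a = w ∨ b = w
  mem_triangle_of_adj : ∀ a b, G.Adj a b → a = x ∨ a = y → b = x ∨ b = y ∨ b = t

namespace IsStarWithTriangle

variable {t x y : V}

theorem symm (h : IsStarWithTriangle G w t x y) : IsStarWithTriangle G w t y x where
  x_ne_center := h.y_ne_center
  y_ne_center := h.x_ne_center
  adj_center a hw hy hx := h.adj_center a hw hx hy
  adj_xy := h.adj_xy.symm
  adj_xt := h.adj_yt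
  adj_yt := h.adj_xt
  eq_center_of_adj a b hab hay hax hby hbx := h.eq_center_of_adj a b hab hax hay hbx hby
  mem_triangle_of_adj a b hab ha := or_left_comm.mp (h.mem_triangle_of_adj a b hab ha.symm)

theorem isBridge (h : IsStarWithTriangle G w t x y) (haw : a ≠ w) (hax : a ≠ x) (hay : a ≠ y) :
    G.IsBridge s(w, a) := by
  have hxw := h.x_ne_center
  have hyw := h.y_ne_center
  by_cases hat : a = t
  · refine isBridge_of_forall_adj_boundary {a, x, y} (by grind) (by grind) fun z hz b hb hzb => ?_
    have hba : b = a := by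
      have hz_triangle := h.mem_triangle_of_adj b z hzb.symm
      grind
    have hzw : z = w := by
      have hzb_center := h.eq_center_of_adj z b hzb
      grind
    exact ⟨hzw, hba⟩
  · refine isBridge_of_forall_adj_boundary {a} haw.symm rfl fun z _ b hb hzb => ?_
    obtain rfl : b = a := hb
    have hz : z ≠ x ∧ z ≠ y := by
      have hb_triangle := h.mem_triangle_of_adj z b hzb
      grind
    exact ⟨(h.eq_center_of_adj z b hzb hz.1 hz.2 hax hay).resolve_right haw, rfl⟩

theorem conflictFreeJoined (h : IsStarWithTriangle G w t x y)
    (hinj : Set.InjOn (fun a => c s(w, a)) {w, x, y}ᶜ) (hc : c s(x, t) ≠ c s(y, t))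
    (hxb : x ≠ b) : ConflictFreeJoined G c x b := by
  have of_adj_t (hb : G.Adj t b) : ConflictFreeJoined G c x b :=
    .of_triangle h.adj_xt h.adj_yt h.adj_xy hc hb hxb
  by_cases hby : b = y
  · exact .of_adj (hby ▸ h.adj_xy)
  by_cases hbt : b = t
  · exact .of_adj (hbt ▸ h.adj_xt)
  by_cases htw : t = w
  · exact of_adj_t (htw ▸ (h.adj_center b (htw ▸ hbt) hxb.symm hby).symm)
  have htw_adj : G.Adj t w := h.adj_center t htw h.adj_xt.ne' h.adj_yt.ne'
  by_cases hbw : b = w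
  · exact of_adj_t (hbw ▸ htw_adj)
  have hcol : c s(w, t) ≠ c s(w, b) := hinj.ne (by simp [htw, h.adj_xt.ne', h.adj_yt.ne'])
    (by simp [hbw, hxb.symm, hby]) (Ne.symm hbt)
  exact .of_adj_adj_adj h.adj_xt htw_adj (h.adj_center b hbw hxb.symm hby).symm h.x_ne_center
    hxb (Ne.symm hbt) (Sym2.eq_swap (a := w) ▸ hcol)

theorem isCFCColoring (h : IsStarWithTriangle G w t x y)
    (hinj : Set.InjOn (fun a => c s(w, a)) {w, x, y}ᶜ) (hc : c s(x, t) ≠ c s(y, t)) :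
    IsCFCColoring G c := by
  have hx {b : V} (hb : x ≠ b) : ConflictFreeJoined G c x b := h.conflictFreeJoined hinj hc hb
  have hy {b : V} (hb : y ≠ b) : ConflictFreeJoined G c y b :=
    h.symm.conflictFreeJoined (Set.pair_comm x y ▸ hinj) hc.symm hb
  intro a b hab
  change ConflictFreeJoined G c a b
  rcases eq_or_ne a x with rfl | hax
  · exact hx hab
  rcases eq_or_ne a y with rfl | hay
  · exact hy hab
  rcases eq_or_ne b x with rfl | hbx
  · exact (hx hab.symm).symm
  rcases eq_or_ne b y with rfl | hby
  · exact (hy hab.symm).symm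
  rcases eq_or_ne a w with rfl | haw
  · exact .of_adj (h.adj_center b hab.symm hbx hby).symm
  rcases eq_or_ne b w with rfl | hbw
  · exact .of_adj (h.adj_center a hab hax hay)
  have hcol : c s(w, a) ≠ c s(w, b) :=
    hinj.ne (by simp [haw, hax, hay]) (by simp [hbw, hbx, hby]) hab
  exact .of_adj_adj (h.adj_center a haw hax hay) (h.adj_center b hbw hbx hby).symm hab
    (Sym2.eq_swap (a := w) ▸ hcol)

theorem cfcNum_eq [Fintype V] (h : IsStarWithTriangle G w t x y) (h5 : 5 ≤ Fintype.card V) :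
    cfcNum G = Fintype.card V - 3 := by
  classical
  let S : Finset V := {w, x, y}ᶜ
  have hcard : S.card = Fintype.card V - 3 := by
    rw [Finset.card_compl, Finset.card_eq_three.mpr
      ⟨w, x, y, h.x_ne_center.symm, h.y_ne_center.symm, h.adj_xy.ne, rfl⟩]
  have hstar {p : V} (hpw : p ≠ w) (hpS : p ∉ S) : ∀ a ∈ S, s(w, a) ≠ s(p, t) := by
    intro a ha heq
    rcases Sym2.eq_iff.mp heq with ⟨hwp, -⟩ | ⟨-, hap⟩
    · exact hpw hwp.symm
    · exact hpS (hap ▸ ha)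
  have hbridge : ∀ a ∈ S, G.IsBridge s(w, a) := by
    intro a ha
    obtain ⟨haw, hax, hay⟩ : a ≠ w ∧ a ≠ x ∧ a ≠ y := by simpa [S] using ha
    exact h.isBridge haw hax hay
  have hcoe : (S : Set V) = {w, x, y}ᶜ := by
    simp only [S, Finset.coe_compl, Finset.coe_insert, Finset.coe_singleton]
  rw [← hcard]
  exact cfcNum_eq_card_of_isBridge (by omega) hbridge
    (hstar h.x_ne_center (by simp [S])) (hstar h.y_ne_center (by simp [S]))
    (Sym2.congr_left.not.mpr h.adj_xy.ne) fun c hinj hc => h.isCFCColoring (hcoe ▸ hinj) hc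

end IsStarWithTriangle

theorem IsStarPlusEdge.exists_isStarWithTriangle (hG : IsStarPlusEdge G) :
    ∃ w t x y, IsStarWithTriangle G w t x y := by
  obtain ⟨v, x, y, hvx, hvy, -, hadj⟩ := hG
  simp only [Sym2.eq_iff] at hadj
  exact ⟨v, v, x, y, {
    x_ne_center := hvx.symm
    y_ne_center := hvy.symm
    adj_center := fun a ha _ _ => (hadj a v).mpr (.inl ⟨.inr rfl, ha⟩)
    adj_xy := (hadj x y).mpr (by simp)
    adj_xt := (hadj x v).mpr (.inl ⟨.inr rfl, hvx.symm⟩)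
    adj_yt := (hadj y v).mpr (.inl ⟨.inr rfl, hvy.symm⟩)
    eq_center_of_adj := by grind
    mem_triangle_of_adj := by grind }⟩

theorem IsUnGraph.exists_isStarWithTriangle (hG : IsUnGraph G) :
    ∃ w t x y, IsStarWithTriangle G w t x y := by
  obtain ⟨u, w, x, y, huw, hux, huy, hwx, hwy, -, hadj⟩ := hG
  have adj_center (a : V) (haw : a ≠ w) (hax : a ≠ x) (hay : a ≠ y) : G.Adj a w := by
    rcases eq_or_ne a u with rfl | hau
    · exact (hadj a w).mpr (.inl rfl)
    · exact (hadj a w).mpr (.inr (.inr (.inr (.inr ⟨a, hau, haw, hax, hay, Sym2.eq_swap⟩))))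
  simp only [Sym2.eq_iff] at hadj
  exact ⟨w, u, x, y, {
    x_ne_center := hwx.symm
    y_ne_center := hwy.symm
    adj_center := adj_center
    adj_xy := (hadj x y).mpr (by simp)
    adj_xt := (hadj x u).mpr (by simp)
    adj_yt := (hadj y u).mpr (by simp)
    eq_center_of_adj := by grind
    mem_triangle_of_adj := by grind }⟩

end ConflictFreeConnection

/-- For n ≥ 5, if G is K_{1,n−1}+e or U_n, then cfc(G) = n − 3. -/
theorem cfcNum_starPlusEdge_or_Un {V : Type*} [Fintype V] (G : SimpleGraph V)
    (n : ℕ) (hn : Fintype.card V = n) (h5 : 5 ≤ n)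
    (hG : IsStarPlusEdge G ∨ IsUnGraph G) :
    cfcNum G = n - 3 := by
  subst hn
  obtain ⟨w, t, x, y, h⟩ := hG.elim IsStarPlusEdge.exists_isStarWithTriangle
    IsUnGraph.exists_isStarWithTriangle
  exact h.cfcNum_eq h5
end
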